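/- arXiv:2203.16206 — 4 statements merged into one kernel-verified Lean document; each statement's English description precedes it below -/
import Mathlib

section
/- For every c > 0: (1) H(c,0) < 0; and (2) the function θ ↦ H(c,θ) is strictly increasing on the interval (0, π/2) ∩ (0, θ_c⁺), where H(c,θ) = ∫_{−1}^{1} (D²·B̂(x)·(2c + √(P(x))) − 2c·cos θ) / ((c + √(P(x)))·√((1 − x²)·P(x))) dx with D = sin θ / c, B̂(x) = λ₁²·x² + λ₂²·(1 − x²), and P(x) = c² + 2·cos θ·B̂(x) − D²·B̂(x)². -/
open Real

/-- The critical angle `θ_c⁺`. -/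
noncomputable def thetaPlus (l1 c : ℝ) : ℝ :=
  if c > Real.sqrt 2 * l1 then π else Real.arccos (1 - c ^ 2 / l1 ^ 2)

/-- `B̂(x) = λ₁² x² + λ₂² (1 - x²)`. -/
noncomputable def Bhat (l1 l2 x : ℝ) : ℝ := l1 ^ 2 * x ^ 2 + l2 ^ 2 * (1 - x ^ 2)

/-- `P(x) = c² + 2 cos θ B̂(x) - D² B̂(x)²` with `D = sin θ / c`. -/
noncomputable def Pfun (l1 l2 c θ x : ℝ) : ℝ :=
  c ^ 2 + 2 * Real.cos θ * Bhat l1 l2 x - (Real.sin θ / c) ^ 2 * Bhat l1 l2 x ^ 2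

/-- The period function `H(c,θ)`. -/
noncomputable def Hfun (l1 l2 c θ : ℝ) : ℝ :=
  ∫ x in (-1 : ℝ)..1,
    ((Real.sin θ / c) ^ 2 * Bhat l1 l2 x * (2 * c + Real.sqrt (Pfun l1 l2 c θ x)) -
        2 * c * Real.cos θ) /
      ((c + Real.sqrt (Pfun l1 l2 c θ x)) * Real.sqrt ((1 - x ^ 2) * Pfun l1 l2 c θ x))

/-!
Substituting `x = cos φ` absorbs the weight `1 / √(1 - x²)` and turns `H(c, θ)` into the integral
over `[0, π]` of a function of `b = B̂(cos φ) ≥ 0`. Because `q = √P` satisfies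
`q² = c² + 2 b cos θ - D² b²`, for `b > 0` that function equals `(D² b + c² / b) / q - c / b`.
For `θ` in `[0, π/2]` the numerator increases and `q` strictly decreases with `θ`, so the
monotonicity is pointwise; so is the negativity at `θ = 0`, where `D = 0`.
-/

/-- `P` as a polynomial in the value `b` of `B̂`, so that `Pfun l1 l2 c θ x` is definitionally
`radicand c θ (Bhat l1 l2 x)`. -/
noncomputable def radicand (c θ b : ℝ) : ℝ :=
  c ^ 2 + 2 * cos θ * b - (sin θ / c) ^ 2 * b ^ 2

/-- The integrand of `H(c, θ)` without its weight `1 / √(1 - x²)`, as a function of the value `b`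
of `B̂`. -/
noncomputable def periodKernel (c θ b : ℝ) : ℝ :=
  ((sin θ / c) ^ 2 * b * (2 * c + √(radicand c θ b)) - 2 * c * cos θ) /
    ((c + √(radicand c θ b)) * √(radicand c θ b))

section Kernel

variable {c θ b : ℝ}

lemma sin_div_sq_monotoneOn : MonotoneOn (fun θ ↦ (sin θ / c) ^ 2) (Set.Icc 0 (π / 2)) := by
  intro s hs t ht hst
  have sin_nonneg : 0 ≤ sin s := sin_nonneg_of_nonneg_of_le_pi hs.1 (by linarith [hs.2, pi_pos])
  have sin_le : sin s ≤ sin t :=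
    sin_le_sin_of_le_of_le_pi_div_two (by linarith [hs.1, pi_pos]) ht.2 hst
  simp only [div_pow]
  gcongr

lemma radicand_eq_mul_div (hc : c ≠ 0) :
    radicand c θ b = (c ^ 2 + (1 + cos θ) * b) * (c ^ 2 - (1 - cos θ) * b) / c ^ 2 := by
  rw [radicand, div_pow, sin_sq]
  field_simp
  ring

lemma radicand_pos (hc : c ≠ 0) (hb : 0 ≤ b) (hθ : (1 - cos θ) * b < c ^ 2) :
    0 < radicand c θ b := by
  have one_add_cos_nonneg : 0 ≤ 1 + cos θ := by linarith [neg_one_le_cos θ]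
  rw [radicand_eq_mul_div hc]
  exact div_pos (mul_pos (by positivity) (sub_pos.2 hθ)) (by positivity)

lemma radicand_strictAntiOn (hb : 0 < b) :
    StrictAntiOn (fun θ ↦ radicand c θ b) (Set.Icc 0 (π / 2)) := by
  intro s hs t ht hst
  have cos_lt : cos t < cos s :=
    cos_lt_cos_of_nonneg_of_le_pi_div_two hs.1 ht.2 hst
  have sin_div_sq_le : (sin s / c) ^ 2 ≤ (sin t / c) ^ 2 := sin_div_sq_monotoneOn hs ht hst.le
  calc radicand c t b
      < c ^ 2 + 2 * cos s * b - (sin t / c) ^ 2 * b ^ 2 := by unfold radicand; gcongr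
    _ ≤ radicand c s b := by unfold radicand; gcongr

lemma continuous_radicand : Continuous (radicand c θ) := by
  unfold radicand
  fun_prop

lemma continuousOn_periodKernel (hc : 0 < c) :
    ContinuousOn (periodKernel c θ) {b | 0 < radicand c θ b} := by
  have continuous_sqrt_radicand : Continuous fun b ↦ √(radicand c θ b) := continuous_radicand.sqrt
  refine ContinuousOn.div (by fun_prop) (by fun_prop) fun b hb ↦ ?_
  have sqrt_radicand_pos : 0 < √(radicand c θ b) := Real.sqrt_pos.2 hb
  positivity

lemma periodKernel_zero_left_neg (hc : 0 < c) (hb : 0 ≤ b) : periodKernel c 0 b < 0 := by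
  have sqrt_radicand_pos : 0 < √(radicand c 0 b) := by
    refine Real.sqrt_pos.2 (radicand_pos hc.ne' hb ?_)
    simpa using pow_pos hc 2
  refine div_neg_of_neg_of_pos ?_ (by positivity)
  simpa using hc

lemma periodKernel_zero_right (hc : 0 < c) : periodKernel c θ 0 = -cos θ / c := by
  have sqrt_radicand : √(radicand c θ 0) = c := by simp [radicand, hc.le]
  rw [periodKernel, sqrt_radicand]
  field_simp
  ring

lemma periodKernel_eq_div_sqrt_sub (hc : 0 < c) (hb : b ≠ 0) (hP : 0 < radicand c θ b) :
    periodKernel c θ b =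
      ((sin θ / c) ^ 2 * b + c ^ 2 / b) / √(radicand c θ b) - c / b := by
  have sq_sqrt_radicand : √(radicand c θ b) ^ 2 =
      c ^ 2 + 2 * cos θ * b - (sin θ / c) ^ 2 * b ^ 2 := sq_sqrt hP.le
  have sqrt_radicand_pos : 0 < √(radicand c θ b) := Real.sqrt_pos.2 hP
  rw [periodKernel]
  generalize √(radicand c θ b) = q at *
  generalize sin θ / c = D at *
  field_simp
  linear_combination c * sq_sqrt_radicand

lemma periodKernel_strictMonoOn (hc : 0 < c) (hb : 0 ≤ b) :
    StrictMonoOn (fun θ ↦ periodKernel c θ b)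
      (Set.Icc 0 (π / 2) ∩ {θ | (1 - cos θ) * b < c ^ 2}) := by
  rintro s ⟨hs, hsb⟩ t ⟨ht, htb⟩ hst
  obtain rfl | hb' := hb.eq_or_lt
  · have cos_lt : cos t < cos s := cos_lt_cos_of_nonneg_of_le_pi_div_two hs.1 ht.2 hst
    simp only [periodKernel_zero_right hc]
    gcongr
  · have radicand_t_pos : 0 < radicand c t b := radicand_pos hc.ne' hb htb
    have radicand_s_pos : 0 < radicand c s b := radicand_pos hc.ne' hb hsb
    have radicand_lt : radicand c t b < radicand c s b := radicand_strictAntiOn hb' hs ht hst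
    have sin_div_sq_le : (sin s / c) ^ 2 ≤ (sin t / c) ^ 2 := sin_div_sq_monotoneOn hs ht hst.le
    have sqrt_radicand_pos : 0 < √(radicand c t b) := Real.sqrt_pos.2 radicand_t_pos
    have sqrt_lt : √(radicand c t b) < √(radicand c s b) :=
      sqrt_lt_sqrt radicand_t_pos.le radicand_lt
    simp only [periodKernel_eq_div_sqrt_sub hc hb'.ne' radicand_s_pos,
      periodKernel_eq_div_sqrt_sub hc hb'.ne' radicand_t_pos]
    have numerator_le : (sin s / c) ^ 2 * b + c ^ 2 / b ≤ (sin t / c) ^ 2 * b + c ^ 2 / b := by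
      gcongr
    exact sub_lt_sub_right (div_lt_div₀' numerator_le sqrt_lt (by positivity) sqrt_radicand_pos) _

end Kernel

section PeriodFunction

variable {l1 l2 c θ : ℝ}

lemma Bhat_cos (φ : ℝ) : Bhat l1 l2 (cos φ) = l1 ^ 2 * cos φ ^ 2 + l2 ^ 2 * sin φ ^ 2 := by
  rw [Bhat, sin_sq]

lemma Bhat_cos_nonneg (φ : ℝ) : 0 ≤ Bhat l1 l2 (cos φ) := by
  rw [Bhat_cos]
  positivity

lemma Bhat_cos_le_sq (hl : l2 ^ 2 ≤ l1 ^ 2) (φ : ℝ) : Bhat l1 l2 (cos φ) ≤ l1 ^ 2 :=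
  calc Bhat l1 l2 (cos φ) = l1 ^ 2 * cos φ ^ 2 + l2 ^ 2 * sin φ ^ 2 := Bhat_cos φ
    _ ≤ l1 ^ 2 * cos φ ^ 2 + l1 ^ 2 * sin φ ^ 2 := by gcongr
    _ = l1 ^ 2 := by rw [← mul_add, cos_sq_add_sin_sq, mul_one]

lemma Hfun_eq_integral_periodKernel :
    Hfun l1 l2 c θ = ∫ φ in 0..π, periodKernel c θ (Bhat l1 l2 (cos φ)) := by
  rw [← Polynomial.Chebyshev.integral_measureT_eq_integral_cos
      (f := fun x ↦ periodKernel c θ (Bhat l1 l2 x)),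
    Polynomial.Chebyshev.integral_measureT]
  refine intervalIntegral.integral_congr fun x hx ↦ ?_
  rw [Set.uIcc_of_le (by norm_num)] at hx
  have one_sub_sq_nonneg : 0 ≤ 1 - x ^ 2 := by nlinarith [hx.1, hx.2]
  have Pfun_eq : Pfun l1 l2 c θ x = radicand c θ (Bhat l1 l2 x) := rfl
  simp only [Pfun_eq, periodKernel, sqrt_mul one_sub_sq_nonneg, sqrt_inv,
    ← div_eq_mul_inv, div_div]
  ring

lemma continuous_periodKernel_Bhat_cos (hc : 0 < c)
    (hθ : ∀ φ, (1 - cos θ) * Bhat l1 l2 (cos φ) < c ^ 2) :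
    Continuous (fun φ ↦ periodKernel c θ (Bhat l1 l2 (cos φ))) := by
  have continuous_Bhat_cos : Continuous fun φ ↦ Bhat l1 l2 (cos φ) := by
    unfold Bhat
    fun_prop
  exact (continuousOn_periodKernel hc).comp_continuous continuous_Bhat_cos
    fun φ ↦ radicand_pos hc.ne' (Bhat_cos_nonneg φ) (hθ φ)

lemma Hfun_zero_neg (hc : 0 < c) : Hfun l1 l2 c 0 < 0 := by
  have kernel_neg (φ : ℝ) : periodKernel c 0 (Bhat l1 l2 (cos φ)) < 0 :=
    periodKernel_zero_left_neg hc (Bhat_cos_nonneg φ)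
  have kernel_continuous : Continuous fun φ ↦ periodKernel c 0 (Bhat l1 l2 (cos φ)) :=
    continuous_periodKernel_Bhat_cos hc fun φ ↦ by simpa using pow_pos hc 2
  rw [Hfun_eq_integral_periodKernel, ← neg_pos, ← intervalIntegral.integral_neg]
  exact intervalIntegral.intervalIntegral_pos_of_pos
    (kernel_continuous.neg.intervalIntegrable 0 π) (fun φ ↦ neg_pos.2 (kernel_neg φ)) pi_pos

lemma Hfun_strictMonoOn (hl : l2 ^ 2 ≤ l1 ^ 2) (hc : 0 < c) :
    StrictMonoOn (fun θ ↦ Hfun l1 l2 c θ)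
      (Set.Icc 0 (π / 2) ∩ {θ | (1 - cos θ) * l1 ^ 2 < c ^ 2}) := by
  have admissible {θ : ℝ} (hθ : (1 - cos θ) * l1 ^ 2 < c ^ 2) (φ : ℝ) :
      (1 - cos θ) * Bhat l1 l2 (cos φ) < c ^ 2 :=
    (mul_le_mul_of_nonneg_left (Bhat_cos_le_sq hl φ) (sub_nonneg.2 (cos_le_one θ))).trans_lt hθ
  rintro s ⟨hs, hs_adm⟩ t ⟨ht, ht_adm⟩ hst
  have kernel_lt (φ : ℝ) : periodKernel c s (Bhat l1 l2 (cos φ)) <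
      periodKernel c t (Bhat l1 l2 (cos φ)) :=
    periodKernel_strictMonoOn hc (Bhat_cos_nonneg φ) ⟨hs, admissible hs_adm φ⟩
      ⟨ht, admissible ht_adm φ⟩ hst
  simp only [Hfun_eq_integral_periodKernel]
  exact intervalIntegral.integral_lt_integral_of_continuousOn_of_le_of_exists_lt pi_pos
    (continuous_periodKernel_Bhat_cos hc (admissible hs_adm)).continuousOn
    (continuous_periodKernel_Bhat_cos hc (admissible ht_adm)).continuousOn
    (fun φ _ ↦ (kernel_lt φ).le) ⟨0, Set.left_mem_Icc.2 pi_pos.le, kernel_lt 0⟩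

lemma one_sub_cos_mul_sq_lt_of_lt_thetaPlus (hl1 : 0 < l1) (hc : 0 < c) (h0 : 0 ≤ θ)
    (hθ : θ < thetaPlus l1 c) : (1 - cos θ) * l1 ^ 2 < c ^ 2 := by
  have sq_sqrt_two_mul : (√2 * l1) ^ 2 = 2 * l1 ^ 2 := by rw [mul_pow, sq_sqrt zero_le_two]
  rw [thetaPlus] at hθ
  split_ifs at hθ with hlarge
  · calc (1 - cos θ) * l1 ^ 2 ≤ 2 * l1 ^ 2 := by gcongr; linarith [neg_one_le_cos θ]
      _ = (√2 * l1) ^ 2 := sq_sqrt_two_mul.symm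
      _ < c ^ 2 := by gcongr
  · have ratio_le_two : c ^ 2 / l1 ^ 2 ≤ 2 := by
      rw [div_le_iff₀ (by positivity), ← sq_sqrt_two_mul]
      exact pow_le_pow_left₀ hc.le (not_lt.1 hlarge) 2
    have ratio_nonneg : 0 ≤ c ^ 2 / l1 ^ 2 := by positivity
    have cos_gt : 1 - c ^ 2 / l1 ^ 2 < cos θ := by
      have := cos_lt_cos_of_nonneg_of_le_pi h0 (arccos_le_pi _) hθ
      rwa [cos_arccos (by linarith) (by linarith)] at this
    rw [← lt_div_iff₀ (by positivity)]
    linarith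

end PeriodFunction

theorem catenoid_H_negative_at_zero_and_strictMono
    (l1 l2 : ℝ) (hl : l1 ≥ l2) (hl2 : l2 > 0) :
    ∀ c > 0, Hfun l1 l2 c 0 < 0 ∧
      StrictMonoOn (fun θ => Hfun l1 l2 c θ)
        (Set.Ioo 0 (π / 2) ∩ Set.Ioo 0 (thetaPlus l1 c)) := by
  intro c hc
  have sq_le : l2 ^ 2 ≤ l1 ^ 2 := pow_le_pow_left₀ hl2.le hl 2
  refine ⟨Hfun_zero_neg hc, (Hfun_strictMonoOn sq_le hc).mono ?_⟩
  rintro θ ⟨hθ, hθ'⟩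
  exact ⟨Set.Ioo_subset_Icc_self hθ,
    one_sub_cos_mul_sq_lt_of_lt_thetaPlus (hl2.trans_le hl) hc hθ.1.le hθ'.2⟩
end

section
/- Let θ̃ : (0,∞) → ℝ be any function such that for every c > 0, θ̃(c) ∈ (0, π/2) ∩ (0, θ_c⁺) and H(c, θ̃(c)) = 0. Then θ̃(c) tends to π/2 as c tends to +∞. -/
open Real

/-!
Substituting `x = cos φ` removes the singularity `1 / √(1 - x²)` from `H(c, θ)`, so the sign of
`H(c, θ)` is that of the numerator of its integrand whenever the latter has constant sign.
Since `c² P = (c² + (1 + cos θ) B̂) (c² - (1 - cos θ) B̂)`, `P` is positive as soon as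
`2 M < c²`, where `M = max λ₁² λ₂²` bounds `B̂`, and then `√P ≤ 2 c`. For such `c` the numerator is
positive if `cos θ < 0` and negative if `cos θ > 2 M / c²`, so a zero of `H(c, ·)` satisfies
`0 ≤ cos θ ≤ 2 M / c²`.
-/

/-- The numerator of the integrand of `Hfun`; on a range where it has constant sign, it determines
the sign of the integral. -/
noncomputable def periodNumerator (l1 l2 c θ x : ℝ) : ℝ :=
  (sin θ / c) ^ 2 * Bhat l1 l2 x * (2 * c + √(Pfun l1 l2 c θ x)) - 2 * c * cos θ

/-- The integrand of `Hfun` with its singular factor `1 / √(1 - x ^ 2)` taken out. -/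
noncomputable def regularIntegrand (l1 l2 c θ x : ℝ) : ℝ :=
  periodNumerator l1 l2 c θ x / ((c + √(Pfun l1 l2 c θ x)) * √(Pfun l1 l2 c θ x))

section

variable {l1 l2 c θ x : ℝ}

theorem Bhat_nonneg (hx : x ∈ Set.Icc (-1) 1) : 0 ≤ Bhat l1 l2 x := by
  have hx_sq : 0 ≤ 1 - x ^ 2 := by nlinarith [hx.1, hx.2]
  unfold Bhat
  positivity

theorem Bhat_le_max (hx : x ∈ Set.Icc (-1) 1) : Bhat l1 l2 x ≤ max (l1 ^ 2) (l2 ^ 2) := by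
  have hx_sq : 0 ≤ 1 - x ^ 2 := by nlinarith [hx.1, hx.2]
  calc
    Bhat l1 l2 x
      ≤ max (l1 ^ 2) (l2 ^ 2) * x ^ 2 + max (l1 ^ 2) (l2 ^ 2) * (1 - x ^ 2) := by
        unfold Bhat
        gcongr
        · exact le_max_left _ _
        · exact le_max_right _ _
    _ = max (l1 ^ 2) (l2 ^ 2) := by ring

theorem continuous_Bhat : Continuous (Bhat l1 l2) := by
  unfold Bhat
  fun_prop

theorem continuous_Pfun : Continuous (Pfun l1 l2 c θ) := by
  have := continuous_Bhat (l1 := l1) (l2 := l2)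
  unfold Pfun
  fun_prop

theorem sq_mul_Pfun (hc : c ≠ 0) :
    c ^ 2 * Pfun l1 l2 c θ x =
      (c ^ 2 + (1 + cos θ) * Bhat l1 l2 x) * (c ^ 2 - (1 - cos θ) * Bhat l1 l2 x) := by
  unfold Pfun
  rw [div_pow, sin_sq]
  field_simp
  ring

theorem Pfun_pos (hc : c ≠ 0) (hB : 0 ≤ Bhat l1 l2 x)
    (hBc : (1 - cos θ) * Bhat l1 l2 x < c ^ 2) : 0 < Pfun l1 l2 c θ x := by
  have hc_sq : 0 < c ^ 2 := by positivity
  have hcos : 0 ≤ 1 + cos θ := by linarith [neg_one_le_cos θ]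
  refine pos_of_mul_pos_right ?_ hc_sq.le
  rw [sq_mul_Pfun hc]
  exact mul_pos (by positivity) (sub_pos.2 hBc)

theorem Pfun_pos_of_two_mul_max_lt (hc : c ≠ 0) (hMc : 2 * max (l1 ^ 2) (l2 ^ 2) < c ^ 2)
    (hx : x ∈ Set.Icc (-1) 1) : 0 < Pfun l1 l2 c θ x := by
  have hB : 0 ≤ Bhat l1 l2 x := Bhat_nonneg hx
  refine Pfun_pos hc hB ?_
  calc
    (1 - cos θ) * Bhat l1 l2 x ≤ 2 * max (l1 ^ 2) (l2 ^ 2) := by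
      gcongr
      · linarith [neg_one_le_cos θ]
      · exact Bhat_le_max hx
    _ < c ^ 2 := hMc

theorem sqrt_Pfun_le (hc : 0 ≤ c) (hB : 0 ≤ Bhat l1 l2 x) (hBc : 2 * Bhat l1 l2 x ≤ c ^ 2) :
    √(Pfun l1 l2 c θ x) ≤ 2 * c := by
  have hcos : cos θ * Bhat l1 l2 x ≤ Bhat l1 l2 x := mul_le_of_le_one_left hB (cos_le_one θ)
  have hsin : 0 ≤ (sin θ / c) ^ 2 * Bhat l1 l2 x ^ 2 := by positivity
  refine sqrt_le_iff.2 ⟨by positivity, ?_⟩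
  unfold Pfun
  nlinarith

theorem Hfun_eq_integral_cos :
    Hfun l1 l2 c θ = ∫ φ in 0..π, regularIntegrand l1 l2 c θ (cos φ) := by
  rw [← Polynomial.Chebyshev.integral_measureT_eq_integral_cos,
    Polynomial.Chebyshev.integral_measureT]
  refine intervalIntegral.integral_congr fun x hx ↦ ?_
  rw [Set.uIcc_of_le (by norm_num)] at hx
  have hx_sq : 0 ≤ 1 - x ^ 2 := by nlinarith [hx.1, hx.2]
  simp only [regularIntegrand, periodNumerator, sqrt_mul hx_sq, sqrt_inv, ← div_eq_mul_inv,
    div_div]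
  ring_nf

theorem continuousOn_regularIntegrand (hc : 0 < c)
    (hP : ∀ x ∈ Set.Icc (-1) 1, 0 < Pfun l1 l2 c θ x) :
    ContinuousOn (regularIntegrand l1 l2 c θ) (Set.Icc (-1) 1) := by
  have := continuous_Bhat (l1 := l1) (l2 := l2)
  have := continuous_Pfun (l1 := l1) (l2 := l2) (c := c) (θ := θ)
  unfold regularIntegrand periodNumerator
  refine ContinuousOn.div (by fun_prop) (by fun_prop) fun x hx ↦ ?_
  have := sqrt_pos.2 (hP x hx)
  positivity

theorem intervalIntegrable_regularIntegrand_cos (hc : 0 < c)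
    (hP : ∀ x ∈ Set.Icc (-1) 1, 0 < Pfun l1 l2 c θ x) :
    IntervalIntegrable (fun φ ↦ regularIntegrand l1 l2 c θ (cos φ)) MeasureTheory.volume 0 π :=
  ((continuousOn_regularIntegrand hc hP).comp_continuous continuous_cos
    cos_mem_Icc).intervalIntegrable 0 π

theorem Hfun_pos (hc : 0 < c) (hP : ∀ x ∈ Set.Icc (-1) 1, 0 < Pfun l1 l2 c θ x)
    (hN : ∀ x ∈ Set.Icc (-1) 1, 0 < periodNumerator l1 l2 c θ x) : 0 < Hfun l1 l2 c θ := by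
  rw [Hfun_eq_integral_cos]
  refine intervalIntegral.intervalIntegral_pos_of_pos_on
    (intervalIntegrable_regularIntegrand_cos hc hP) (fun φ _ ↦ ?_) pi_pos
  have := sqrt_pos.2 (hP _ (cos_mem_Icc φ))
  exact div_pos (hN _ (cos_mem_Icc φ)) (by positivity)

theorem Hfun_neg (hc : 0 < c) (hP : ∀ x ∈ Set.Icc (-1) 1, 0 < Pfun l1 l2 c θ x)
    (hN : ∀ x ∈ Set.Icc (-1) 1, periodNumerator l1 l2 c θ x < 0) : Hfun l1 l2 c θ < 0 := by
  rw [Hfun_eq_integral_cos, ← neg_pos, ← intervalIntegral.integral_neg]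
  refine intervalIntegral.intervalIntegral_pos_of_pos_on
    (intervalIntegrable_regularIntegrand_cos hc hP).neg (fun φ _ ↦ neg_pos.2 ?_) pi_pos
  have := sqrt_pos.2 (hP _ (cos_mem_Icc φ))
  exact div_neg_of_neg_of_pos (hN _ (cos_mem_Icc φ)) (by positivity)

theorem periodNumerator_pos (hc : 0 < c) (hB : 0 ≤ Bhat l1 l2 x) (hcos : cos θ < 0) :
    0 < periodNumerator l1 l2 c θ x := by
  have hfirst : 0 ≤ (sin θ / c) ^ 2 * Bhat l1 l2 x * (2 * c + √(Pfun l1 l2 c θ x)) := by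
    positivity
  have hsecond : 2 * c * cos θ < 0 := mul_neg_of_pos_of_neg (by positivity) hcos
  unfold periodNumerator
  linarith

theorem periodNumerator_neg (hc : 0 < c) (hB : 0 ≤ Bhat l1 l2 x) (hBc : 2 * Bhat l1 l2 x ≤ c ^ 2)
    (hcos : 2 * Bhat l1 l2 x / c ^ 2 < cos θ) : periodNumerator l1 l2 c θ x < 0 := by
  refine sub_neg.2 ?_
  calc
    (sin θ / c) ^ 2 * Bhat l1 l2 x * (2 * c + √(Pfun l1 l2 c θ x))
      ≤ 1 / c ^ 2 * Bhat l1 l2 x * (2 * c + 2 * c) := by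
        rw [div_pow]
        gcongr
        · exact sin_sq_le_one θ
        · exact sqrt_Pfun_le hc.le hB hBc
    _ = 2 * c * (2 * Bhat l1 l2 x / c ^ 2) := by ring
    _ < 2 * c * cos θ := by gcongr

theorem cos_nonneg_of_Hfun_eq_zero (hc : 0 < c) (hMc : 2 * max (l1 ^ 2) (l2 ^ 2) < c ^ 2)
    (hH : Hfun l1 l2 c θ = 0) : 0 ≤ cos θ := by
  by_contra! hcos
  exact (Hfun_pos hc (fun _ hx ↦ Pfun_pos_of_two_mul_max_lt hc.ne' hMc hx)
    fun _ hx ↦ periodNumerator_pos hc (Bhat_nonneg hx) hcos).ne' hH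

theorem cos_le_of_Hfun_eq_zero (hc : 0 < c) (hMc : 2 * max (l1 ^ 2) (l2 ^ 2) < c ^ 2)
    (hH : Hfun l1 l2 c θ = 0) : cos θ ≤ 2 * max (l1 ^ 2) (l2 ^ 2) / c ^ 2 := by
  by_contra! hcos
  refine (Hfun_neg hc (fun _ hx ↦ Pfun_pos_of_two_mul_max_lt hc.ne' hMc hx) fun x hx ↦ ?_).ne hH
  have hBM : 2 * Bhat l1 l2 x ≤ 2 * max (l1 ^ 2) (l2 ^ 2) := by
    gcongr
    exact Bhat_le_max hx
  refine periodNumerator_neg hc (Bhat_nonneg hx) (hBM.trans hMc.le) (hcos.trans_le' ?_)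
  gcongr

end

theorem tendsto_cos_zero_of_Hfun_eq_zero {l1 l2 : ℝ} {θt : ℝ → ℝ}
    (hzero : ∀ᶠ c in Filter.atTop, Hfun l1 l2 c (θt c) = 0) :
    Filter.Tendsto (fun c ↦ cos (θt c)) Filter.atTop (nhds 0) := by
  have hbound : Filter.Tendsto (fun c : ℝ ↦ 2 * max (l1 ^ 2) (l2 ^ 2) / c ^ 2)
      Filter.atTop (nhds 0) :=
    tendsto_const_nhds.div_atTop (Filter.tendsto_pow_atTop two_ne_zero)
  have hlarge : ∀ᶠ c : ℝ in Filter.atTop, 2 * max (l1 ^ 2) (l2 ^ 2) < c ^ 2 :=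
    (Filter.tendsto_pow_atTop two_ne_zero).eventually_gt_atTop _
  refine tendsto_of_tendsto_of_tendsto_of_le_of_le' tendsto_const_nhds hbound ?_ ?_
  · filter_upwards [Filter.eventually_gt_atTop 0, hlarge, hzero] with c hc hMc hH
    exact cos_nonneg_of_Hfun_eq_zero hc hMc hH
  · filter_upwards [Filter.eventually_gt_atTop 0, hlarge, hzero] with c hc hMc hH
    exact cos_le_of_Hfun_eq_zero hc hMc hH

theorem catenoid_theta_tendsto_pi_div_two_general {l1 l2 : ℝ} {θt : ℝ → ℝ}
    (hmem : ∀ᶠ c in Filter.atTop, θt c ∈ Set.Icc 0 π)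
    (hzero : ∀ᶠ c in Filter.atTop, Hfun l1 l2 c (θt c) = 0) :
    Filter.Tendsto θt Filter.atTop (nhds (π / 2)) := by
  have harccos : Filter.Tendsto (fun c ↦ arccos (cos (θt c))) Filter.atTop (nhds (π / 2)) := by
    rw [← arccos_zero]
    exact (continuous_arccos.tendsto 0).comp (tendsto_cos_zero_of_Hfun_eq_zero hzero)
  refine harccos.congr' ?_
  filter_upwards [hmem] with c hc
  exact arccos_cos hc.1 hc.2

theorem catenoid_theta_tendsto_pi_div_two
    (l1 l2 : ℝ) (hl : l1 ≥ l2) (hl2 : l2 > 0)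
    (θt : ℝ → ℝ)
    (hθt : ∀ c > 0, θt c ∈ Set.Ioo 0 (π / 2) ∩ Set.Ioo 0 (thetaPlus l1 c) ∧
      Hfun l1 l2 c (θt c) = 0) :
    Filter.Tendsto θt Filter.atTop (nhds (π / 2)) := by
  have hpos := Filter.eventually_gt_atTop (0 : ℝ)
  exact catenoid_theta_tendsto_pi_div_two_general
    (hpos.mono fun c hc ↦ ⟨(hθt c hc).1.1.1.le, by linarith [(hθt c hc).1.1.2, pi_pos]⟩)
    (hpos.mono fun c hc ↦ (hθt c hc).2)
end

section
/- Let φ : ℝ → ℝ be differentiable with φ(0) = 0 and φ'(u) = √(c² + 2·cos θ·B(u) − D²·B(u)²) for all u, where B(u) = λ₁²·cos²(φ u) + λ₂²·sin²(φ u) and D = sin θ / c; let U > 0 satisfy φ(u + U) = φ(u) + π for all u; let f : ℝ → ℝ be differentiable with f(0) = 0 and f'(u) = D·B(u); and define G(u) = ∫₀^u (c − φ'(s))/B(s) ds, A(u,v) = f(u) + c·v, and x₃(u,v) = −λ₁·λ₂·D·v + λ₁·λ₂·G(u). Assume D·f(U) + c·G(U) = 0. Then for all (u,v) ∈ ℝ²: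 (1) A(u + 2U, v − 2·f(U)/c) = A(u,v); (2) x₃(u + 2U, v − 2·f(U)/c) = x₃(u,v); and (3) φ(u + 2U) = φ(u) + 2π. -/
open Real

/-- The quantity `B(u) = λ₁² cos²(φ u) + λ₂² sin²(φ u)`. -/
noncomputable def Bfun (l1 l2 : ℝ) (φ : ℝ → ℝ) (u : ℝ) : ℝ :=
  l1 ^ 2 * Real.cos (φ u) ^ 2 + l2 ^ 2 * Real.sin (φ u) ^ 2

/-- The function `G(u) = ∫₀^u (c - φ'(s))/B(s) ds`. -/
noncomputable def Gfun (l1 l2 c : ℝ) (φ : ℝ → ℝ) (u : ℝ) : ℝ :=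
  ∫ s in (0 : ℝ)..u, (c - deriv φ s) / Bfun l1 l2 φ s

/-- `A(u,v) = f(u) + c v`. -/
noncomputable def Afun (c : ℝ) (f : ℝ → ℝ) (u v : ℝ) : ℝ := f u + c * v

/-- The third coordinate `x₃(u,v) = -λ₁ λ₂ D v + λ₁ λ₂ G(u)`. -/
noncomputable def x3fun (l1 l2 c θ : ℝ) (φ : ℝ → ℝ) (u v : ℝ) : ℝ :=
  -(l1 * l2 * (Real.sin θ / c)) * v + l1 * l2 * Gfun l1 l2 c φ u

/-!
Shifting `u` by `U` shifts `φ` by `π`, which leaves `B` and `φ'` unchanged. So `f` and `G` are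
primitives of `U`-periodic functions, and each grows by a constant, `f(U)` resp. `G(U)`, under the
shift. Over two half-turns `A` and `x₃` therefore grow by constants as well; lowering `v` by
`2 f(U) / c` cancels the growth of `A`, and it cancels that of `x₃` because of the period condition
`D f(U) + c G(U) = 0`.
-/

theorem map_add_two_mul_of_map_add {R S : Type*} [NonAssocSemiring R] [NonAssocSemiring S]
    {g : R → S} {T : R} {k : S} (hg : ∀ x, g (x + T) = g x + k) (x : R) :
    g (x + 2 * T) = g x + 2 * k := by
  rw [two_mul, ← add_assoc, hg, hg, add_assoc, two_mul]

theorem deriv_periodic_of_map_add {𝕜 E : Type*} [NontriviallyNormedField 𝕜]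
    [NormedAddCommGroup E] [NormedSpace 𝕜 E] {g : 𝕜 → E} {T : 𝕜} {k : E}
    (hg : ∀ x, g (x + T) = g x + k) : Function.Periodic (deriv g) T := fun x => by
  rw [← deriv_comp_add_const, funext hg, deriv_add_const]

theorem sub_eq_sub_of_deriv_periodic {𝕜 E : Type*} [RCLike 𝕜] [NormedAddCommGroup E]
    [NormedSpace 𝕜 E] {g : 𝕜 → E} {T : 𝕜} (hg : Differentiable 𝕜 g)
    (hper : Function.Periodic (deriv g) T) (x y : 𝕜) : g (x + T) - g x = g (y + T) - g y := by
  have hderiv (z : 𝕜) : HasDerivAt (fun z => g (z + T) - g z) 0 z := by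
    simpa only [hper z, sub_self] using
      ((hg (z + T)).hasDerivAt.comp_add_const z T).fun_sub (hg z).hasDerivAt
  exact is_const_of_deriv_eq_zero (fun z => (hderiv z).differentiableAt)
    (fun z => (hderiv z).deriv) x y

section Catenoid

variable {l1 l2 c θ U : ℝ} {φ f : ℝ → ℝ}

theorem Bfun_pos (hl1 : l1 ≠ 0) (hl2 : l2 ≠ 0) (φ : ℝ → ℝ) (u : ℝ) : 0 < Bfun l1 l2 φ u := by
  unfold Bfun
  by_cases hcos : cos (φ u) = 0
  · have hsin : sin (φ u) ≠ 0 := fun hsin => by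
      simpa [hsin, hcos] using sin_sq_add_cos_sq (φ u)
    positivity
  · positivity

theorem Bfun_periodic (hφU : ∀ u, φ (u + U) = φ u + π) :
    Function.Periodic (Bfun l1 l2 φ) U := fun u => by
  simp only [Bfun, hφU, cos_add_pi, sin_add_pi, neg_sq]

@[fun_prop]
theorem continuous_Bfun (hφ : Continuous φ) : Continuous (Bfun l1 l2 φ) := by
  unfold Bfun
  fun_prop

theorem Gfun_add (hl1 : l1 ≠ 0) (hl2 : l2 ≠ 0) (hφ : ContDiff ℝ 1 φ)
    (hφU : ∀ u, φ (u + U) = φ u + π) (u : ℝ) :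
    Gfun l1 l2 c φ (u + U) = Gfun l1 l2 c φ u + Gfun l1 l2 c φ U := by
  have hcont : Continuous fun s => (c - deriv φ s) / Bfun l1 l2 φ s :=
    (continuous_const.sub hφ.continuous_deriv_one).div (continuous_Bfun hφ.continuous)
      fun s => (Bfun_pos hl1 hl2 φ s).ne'
  have hper : Function.Periodic (fun s => (c - deriv φ s) / Bfun l1 l2 φ s) U := fun s => by
    simp only [deriv_periodic_of_map_add hφU s, Bfun_periodic hφU s]
  simpa only [Gfun, zero_add] using
    hper.intervalIntegral_add_eq_add 0 u fun _ _ => hcont.intervalIntegrable _ _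

theorem Afun_add_sub {T a : ℝ} (hc : c ≠ 0) (hf : ∀ u, f (u + T) = f u + a) (u v : ℝ) :
    Afun c f (u + T) (v - a / c) = Afun c f u v := by
  simp only [Afun, hf]
  field_simp
  ring

theorem x3fun_add_sub {T a b : ℝ} (hc : c ≠ 0)
    (hG : ∀ u, Gfun l1 l2 c φ (u + T) = Gfun l1 l2 c φ u + b)
    (hab : sin θ / c * a + c * b = 0) (u v : ℝ) :
    x3fun l1 l2 c θ φ (u + T) (v - a / c) = x3fun l1 l2 c θ φ u v := by
  have hb : sin θ / c * (a / c) + b = 0 := by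
    rw [← mul_div_assoc, div_add' _ _ _ hc, mul_comm b, hab, zero_div]
  simp only [x3fun, hG]
  linear_combination l1 * l2 * hb

theorem catenoid_periodicity_general (hl1 : l1 ≠ 0) (hl2 : l2 ≠ 0) (hc : c ≠ 0)
    (hφ : ContDiff ℝ 1 φ) (hφU : ∀ u, φ (u + U) = φ u + π)
    (hf : Differentiable ℝ f) (hf0 : f 0 = 0)
    (hf' : ∀ u, deriv f u = sin θ / c * Bfun l1 l2 φ u)
    (hperiod : sin θ / c * f U + c * Gfun l1 l2 c φ U = 0) (u v : ℝ) :
    Afun c f (u + 2 * U) (v - 2 * f U / c) = Afun c f u v ∧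
      x3fun l1 l2 c θ φ (u + 2 * U) (v - 2 * f U / c) = x3fun l1 l2 c θ φ u v ∧
      φ (u + 2 * U) = φ u + 2 * π := by
  have hf'_periodic : Function.Periodic (deriv f) U := fun s => by
    rw [hf', hf', Bfun_periodic hφU s]
  have hf_add (s : ℝ) : f (s + U) = f s + f U := by
    simpa only [zero_add, hf0, sub_zero, sub_eq_iff_eq_add'] using
      sub_eq_sub_of_deriv_periodic hf hf'_periodic s 0
  have hperiod_two : sin θ / c * (2 * f U) + c * (2 * Gfun l1 l2 c φ U) = 0 := by
    linear_combination 2 * hperiod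
  exact ⟨Afun_add_sub hc (map_add_two_mul_of_map_add hf_add) u v,
    x3fun_add_sub hc (map_add_two_mul_of_map_add (Gfun_add hl1 hl2 hφ hφU)) hperiod_two u v,
    map_add_two_mul_of_map_add hφU u⟩

end Catenoid

theorem catenoid_periodicity
    (l1 l2 c θ : ℝ) (hl : l1 ≥ l2) (hl2 : l2 > 0) (hc : c > 0)
    (hθ : |θ| < thetaPlus l1 c)
    (φ : ℝ → ℝ) (hφ : Differentiable ℝ φ) (hφ0 : φ 0 = 0)
    (hφ' : ∀ u, deriv φ u =
      Real.sqrt (c ^ 2 + 2 * Real.cos θ * Bfun l1 l2 φ u -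
        (Real.sin θ / c) ^ 2 * Bfun l1 l2 φ u ^ 2))
    (U : ℝ) (hU : U > 0) (hφU : ∀ u, φ (u + U) = φ u + π)
    (f : ℝ → ℝ) (hf : Differentiable ℝ f) (hf0 : f 0 = 0)
    (hf' : ∀ u, deriv f u = (Real.sin θ / c) * Bfun l1 l2 φ u)
    (hperiod : (Real.sin θ / c) * f U + c * Gfun l1 l2 c φ U = 0) :
    ∀ u v : ℝ,
      Afun c f (u + 2 * U) (v - 2 * f U / c) = Afun c f u v ∧
      x3fun l1 l2 c θ φ (u + 2 * U) (v - 2 * f U / c) = x3fun l1 l2 c θ φ u v ∧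
      φ (u + 2 * U) = φ u + 2 * π := by
  have hφ'_cont : Continuous (deriv φ) := by
    have hφ_cont := hφ.continuous
    rw [funext hφ']
    fun_prop
  exact catenoid_periodicity_general (hl2.trans_le hl).ne' hl2.ne' hc.ne'
    (contDiff_one_iff_deriv.2 ⟨hφ, hφ'_cont⟩) hφU hf hf0 hf' hperiod
end

section
/- Assume λ₁ ≥ 1 and c > λ₁², and let θ ∈ (0, π/2). Let φ : ℝ → ℝ be differentiable with φ(0) = 0 and φ'(u) = √(c² + 2·cos θ·B(u) − D²·B(u)²) for all u, where B(u) = λ₁²·cos²(φ u) + λ₂²·sin²(φ u) and D = sin θ / c, and let f : ℝ → ℝ be differentiable with f(0) = 0 and f'(u) = D·B(u). Then for all u ∈ ℝ: (1) |f'(u)| ≤ λ₁²/c and |f(u)| ≤ (λ₁²/c)·|u|; (2) √(c² − λ₁⁴) ≤ φ'(u) ≤ √(c² + 2·λ₁²); (3) |c − φ'(u)| ≤ (λ₁²/c)·(λ₁²/c² + 2). -/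
open Real

/-!
Since `0 ≤ B ≤ λ₁²`, the derivative `f' = D B` is at most `λ₁² / c`, and
`(φ')² = c² + 2 cos θ B - (D B)²` differs from `c²` by at most `2 λ₁²` upwards and
`(λ₁² / c)²` downwards. The estimate of `c - φ'` is then read off from
`c² - φ'² = (c - φ') (c + φ')`, where `c + φ' ≥ c`.
-/

lemma Bfun_nonneg (l1 l2 : ℝ) (φ : ℝ → ℝ) (u : ℝ) : 0 ≤ Bfun l1 l2 φ u := by
  unfold Bfun
  positivity

lemma Bfun_le_sq {l1 l2 : ℝ} (hl : |l2| ≤ |l1|) (φ : ℝ → ℝ) (u : ℝ) :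
    Bfun l1 l2 φ u ≤ l1 ^ 2 :=
  calc
    Bfun l1 l2 φ u ≤ l1 ^ 2 * cos (φ u) ^ 2 + l1 ^ 2 * sin (φ u) ^ 2 := by
      unfold Bfun
      gcongr _ + ?_ * _
      exact sq_le_sq.mpr hl
    _ = l1 ^ 2 := by rw [← mul_add, cos_sq_add_sin_sq, mul_one]

lemma abs_Bfun_le_sq {l1 l2 : ℝ} (hl : |l2| ≤ |l1|) (φ : ℝ → ℝ) (u : ℝ) :
    |Bfun l1 l2 φ u| ≤ l1 ^ 2 :=
  (abs_of_nonneg (Bfun_nonneg l1 l2 φ u)).trans_le (Bfun_le_sq hl φ u)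

lemma abs_sub_le_abs_sq_sub_sq_div {K : Type*} [Field K] [LinearOrder K] [IsStrictOrderedRing K]
    {a b : K} (ha : 0 < a) (hb : 0 ≤ b) : |a - b| ≤ |a ^ 2 - b ^ 2| / a := by
  rw [le_div_iff₀ ha]
  calc
    |a - b| * a ≤ |a - b| * (a + b) := by gcongr; exact le_add_of_nonneg_right hb
    _ = |a ^ 2 - b ^ 2| := by
      rw [sq_sub_sq, abs_mul, abs_of_pos (add_pos_of_pos_of_nonneg ha hb), mul_comm]

/-- The square of the derivative of the angle `φ`, as a function of the value `b` taken by `B`. -/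
noncomputable def angleDerivSq (c θ b : ℝ) : ℝ :=
  c ^ 2 + 2 * cos θ * b - (sin θ / c) ^ 2 * b ^ 2

section

variable {c θ b m : ℝ}

lemma abs_cos_mul_le (hb : |b| ≤ m) : |cos θ * b| ≤ m :=
  calc
    |cos θ * b| = |cos θ| * |b| := abs_mul _ _
    _ ≤ 1 * m := by gcongr; exact abs_cos_le_one θ
    _ = m := one_mul m

lemma abs_sin_div_mul_le (hc : 0 < c) (hb : |b| ≤ m) : |sin θ / c * b| ≤ m / c :=
  calc
    |sin θ / c * b| = |sin θ| * |b| / c := by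
      rw [abs_mul, abs_div, abs_of_pos hc, div_mul_eq_mul_div]
    _ ≤ 1 * m / c := by gcongr; exact abs_sin_le_one θ
    _ = m / c := by rw [one_mul]

lemma sin_div_sq_mul_sq_le (hc : 0 < c) (hb : |b| ≤ m) :
    (sin θ / c) ^ 2 * b ^ 2 ≤ (m / c) ^ 2 := by
  rw [← mul_pow]
  exact sq_le_sq.mpr ((abs_sin_div_mul_le hc hb).trans (le_abs_self _))

lemma sq_sub_sq_le_angleDerivSq (hc : 1 ≤ c) (hθb : 0 ≤ cos θ * b) (hb : |b| ≤ m) :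
    c ^ 2 - m ^ 2 ≤ angleDerivSq c θ b := by
  have hm : 0 ≤ m := (abs_nonneg b).trans hb
  have hsin : (sin θ / c) ^ 2 * b ^ 2 ≤ m ^ 2 :=
    (sin_div_sq_mul_sq_le (by linarith) hb).trans (by gcongr; exact div_le_self hm hc)
  unfold angleDerivSq
  linarith

lemma angleDerivSq_le (hb : |b| ≤ m) : angleDerivSq c θ b ≤ c ^ 2 + 2 * m := by
  have hcos : cos θ * b ≤ m := (abs_le.mp (abs_cos_mul_le hb)).2
  have hsin : 0 ≤ (sin θ / c) ^ 2 * b ^ 2 := by positivity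
  unfold angleDerivSq
  linarith

lemma abs_sq_sub_angleDerivSq_le (hc : 0 < c) (hb : |b| ≤ m) :
    |c ^ 2 - angleDerivSq c θ b| ≤ (m / c) ^ 2 + 2 * m :=
  calc
    |c ^ 2 - angleDerivSq c θ b| = |(sin θ / c) ^ 2 * b ^ 2 - 2 * (cos θ * b)| := by
      unfold angleDerivSq
      congr 1
      ring
    _ ≤ |(sin θ / c) ^ 2 * b ^ 2| + |2 * (cos θ * b)| := abs_sub _ _
    _ = (sin θ / c) ^ 2 * b ^ 2 + 2 * |cos θ * b| := by
      rw [abs_of_nonneg (by positivity), abs_mul, abs_two]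
    _ ≤ (m / c) ^ 2 + 2 * m := by
      gcongr
      exacts [sin_div_sq_mul_sq_le hc hb, abs_cos_mul_le hb]

lemma abs_sub_sqrt_angleDerivSq_le (hc : 0 < c) (hb : |b| ≤ m) (h : 0 ≤ angleDerivSq c θ b) :
    |c - √(angleDerivSq c θ b)| ≤ m / c * (m / c ^ 2 + 2) :=
  calc
    |c - √(angleDerivSq c θ b)| ≤ |c ^ 2 - √(angleDerivSq c θ b) ^ 2| / c :=
      abs_sub_le_abs_sq_sub_sq_div hc (sqrt_nonneg _)
    _ = |c ^ 2 - angleDerivSq c θ b| / c := by rw [sq_sqrt h]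
    _ ≤ ((m / c) ^ 2 + 2 * m) / c := by gcongr; exact abs_sq_sub_angleDerivSq_le hc hb
    _ = m / c * (m / c ^ 2 + 2) := by ring

end

theorem catenoid_asymptotic_estimates_general {l1 l2 c θ : ℝ} (hl : |l2| ≤ |l1|) (hc1 : 1 ≤ c)
    (hc : l1 ^ 2 ≤ c) (hθ : 0 ≤ cos θ) {φ f : ℝ → ℝ}
    (hφ : ∀ u, HasDerivAt φ (√(angleDerivSq c θ (Bfun l1 l2 φ u))) u)
    (hf : ∀ u, HasDerivAt f (sin θ / c * Bfun l1 l2 φ u) u) (hf0 : f 0 = 0) (u : ℝ) :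
    |deriv f u| ≤ l1 ^ 2 / c ∧
      |f u| ≤ l1 ^ 2 / c * |u| ∧
      √(c ^ 2 - l1 ^ 4) ≤ deriv φ u ∧
      deriv φ u ≤ √(c ^ 2 + 2 * l1 ^ 2) ∧
      |c - deriv φ u| ≤ l1 ^ 2 / c * (l1 ^ 2 / c ^ 2 + 2) := by
  have hc0 : 0 < c := by linarith
  have hB (v : ℝ) : |Bfun l1 l2 φ v| ≤ l1 ^ 2 := abs_Bfun_le_sq hl φ v
  have hf' (v : ℝ) : |sin θ / c * Bfun l1 l2 φ v| ≤ l1 ^ 2 / c := abs_sin_div_mul_le hc0 (hB v)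
  have hf_le : |f u| ≤ l1 ^ 2 / c * |u| := by
    simpa [hf0] using convex_univ.norm_image_sub_le_of_norm_hasDerivWithin_le
      (fun v _ ↦ (hf v).hasDerivWithinAt) (fun v _ ↦ hf' v) (Set.mem_univ 0) (Set.mem_univ u)
  have hlower : c ^ 2 - (l1 ^ 2) ^ 2 ≤ angleDerivSq c θ (Bfun l1 l2 φ u) :=
    sq_sub_sq_le_angleDerivSq hc1 (mul_nonneg hθ (Bfun_nonneg l1 l2 φ u)) (hB u)
  have hnonneg : 0 ≤ angleDerivSq c θ (Bfun l1 l2 φ u) :=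
    (sub_nonneg.mpr (by gcongr)).trans hlower
  rw [(hf u).deriv, (hφ u).deriv, show l1 ^ 4 = (l1 ^ 2) ^ 2 by ring]
  exact ⟨hf' u, hf_le, sqrt_le_sqrt hlower, sqrt_le_sqrt (angleDerivSq_le (hB u)),
    abs_sub_sqrt_angleDerivSq_le hc0 (hB u) hnonneg⟩

theorem catenoid_asymptotic_estimates
    (l1 l2 c θ : ℝ) (hl : l1 ≥ l2) (hl2 : l2 > 0)
    (hl1 : l1 ≥ 1) (hc : c > l1 ^ 2) (hθ : θ ∈ Set.Ioo 0 (π / 2))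
    (φ : ℝ → ℝ) (hφ : Differentiable ℝ φ) (hφ0 : φ 0 = 0)
    (hφ' : ∀ u, deriv φ u =
      Real.sqrt (c ^ 2 + 2 * Real.cos θ * Bfun l1 l2 φ u -
        (Real.sin θ / c) ^ 2 * Bfun l1 l2 φ u ^ 2))
    (f : ℝ → ℝ) (hf : Differentiable ℝ f) (hf0 : f 0 = 0)
    (hf' : ∀ u, deriv f u = (Real.sin θ / c) * Bfun l1 l2 φ u) :
    ∀ u : ℝ,
      |deriv f u| ≤ l1 ^ 2 / c ∧
      |f u| ≤ (l1 ^ 2 / c) * |u| ∧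
      Real.sqrt (c ^ 2 - l1 ^ 4) ≤ deriv φ u ∧
      deriv φ u ≤ Real.sqrt (c ^ 2 + 2 * l1 ^ 2) ∧
      |c - deriv φ u| ≤ (l1 ^ 2 / c) * (l1 ^ 2 / c ^ 2 + 2) := by
  exact catenoid_asymptotic_estimates_general (abs_le_abs_of_nonneg hl2.le hl) (by nlinarith) hc.le
    (cos_nonneg_of_mem_Icc ⟨by linarith [hθ.1, pi_pos], hθ.2.le⟩)
    (fun u ↦ hφ' u ▸ (hφ u).hasDerivAt) (fun u ↦ hf' u ▸ (hf u).hasDerivAt) hf0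
end
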